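/- Let p be a set partition word with N(p) ≥ 3 distinct letters and length |p| ≤ 2N(p). If φ_{aba}^{N(p)−1}(p) is not sorted, then p is equivalent to (a_1 a_2 ⋯ a_{N(p)})^2, the concatenation of two copies of a word listing N(p) distinct letters. -/

import Mathlib

/-- West's stack-sorting map, implemented with an explicit stack (top = head). -/
def sWestAux : List ℕ → List ℕ → List ℕ
  | [], st => st
  | x :: xs, [] => sWestAux xs [x]
  | x :: xs, t :: st =>
      if t < x then t :: sWestAux (x :: xs) st
      else sWestAux xs (x :: t :: st)
termination_by l st => 2 * l.length + st.length

def sWest (l : List ℕ) : List ℕ := sWestAux l []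

/-- A word contains a subsequence equivalent to `aba`. -/
def HasABA (l : List ℕ) : Prop :=
  ∃ i j k : Fin l.length, i < j ∧ j < k ∧ l.get i = l.get k ∧ l.get j ≠ l.get i

instance (l : List ℕ) : Decidable (HasABA l) := by
  unfold HasABA; infer_instance

/-- Xia's stack-sorting map φ_{aba}, with explicit stack (top = head). -/
def phiAux : List ℕ → List ℕ → List ℕ
  | [], st => st
  | x :: xs, [] => phiAux xs [x]
  | x :: xs, t :: st =>
      if HasABA (x :: t :: st) then t :: phiAux (x :: xs) st
      else phiAux xs (x :: t :: st)
termination_by l st => 2 * l.length + st.length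

def phi (p : List ℕ) : List ℕ := phiAux p []

/-- A set partition word is sorted: all occurrences of each letter are consecutive. -/
def SortedWord (p : List ℕ) : Prop :=
  ∀ i j k : Fin p.length, i < j → j < k → p.get i = p.get k → p.get j = p.get i

/-- Number of distinct letters. -/
def Nletters (p : List ℕ) : ℕ := p.toFinset.card

def Avoids231 (l : List ℕ) : Prop :=
  ¬ ∃ i j k : Fin l.length, i < j ∧ j < k ∧ l.get k < l.get i ∧ l.get i < l.get j


/-- Two words are equivalent if related by a letterwise bijection of the alphabet. -/
def EquivWords (p q : List ℕ) : Prop := ∃ f : ℕ ≃ ℕ, q = p.map f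


/-- The letter `b` is not clumped in `l`. -/
def Bad (b : ℕ) (l : List ℕ) : Prop := ∃ x, x ≠ b ∧ [b, x, b].Sublist l

theorem three_sublist_iff (b x c : ℕ) (l : List ℕ) :
    [b, x, c].Sublist l ↔ ∃ i j k : Fin l.length, i < j ∧ j < k ∧
      l.get i = b ∧ l.get j = x ∧ l.get k = c := by
  constructor
  · intro h
    obtain ⟨f, hf⟩ := List.sublist_iff_exists_fin_orderEmbedding_get_eq.1 h
    refine ⟨f ⟨0, by simp⟩, f ⟨1, by simp⟩, f ⟨2, by simp⟩, ?_, ?_, ?_, ?_, ?_⟩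
    · simp
    · simp
    · rw [← hf]; rfl
    · rw [← hf]; rfl
    · rw [← hf]; rfl
  · rintro ⟨i, j, k, hij, hjk, rfl, rfl, rfl⟩
    have := List.map_getElem_sublist (l := l) (is := [i, j, k]) (by
      simp [hij, hjk, hij.trans hjk])
    simpa using this

theorem hasABA_iff (l : List ℕ) : HasABA l ↔ ∃ b, Bad b l := by
  unfold HasABA Bad
  constructor
  · rintro ⟨i, j, k, h1, h2, h3, h4⟩
    exact ⟨l.get i, l.get j, h4, (three_sublist_iff _ _ _ _).2 ⟨i, j, k, h1, h2, rfl, rfl, h3.symm⟩⟩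
  · rintro ⟨b, x, hx, h⟩
    obtain ⟨i, j, k, h1, h2, h3, h4, h5⟩ := (three_sublist_iff _ _ _ _).1 h
    exact ⟨i, j, k, h1, h2, h3.trans h5.symm, by rw [h4, h3]; exact hx⟩

theorem sorted_iff (l : List ℕ) : SortedWord l ↔ ¬ ∃ b, Bad b l := by
  rw [← hasABA_iff]
  unfold SortedWord HasABA
  push Not
  rfl

theorem Bad.mono {b : ℕ} {l m : List ℕ} (h : Bad b l) (hs : l.Sublist m) : Bad b m := by
  obtain ⟨x, hx, h⟩ := h
  exact ⟨x, hx, h.trans hs⟩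

theorem Bad.mem {b : ℕ} {l : List ℕ} (h : Bad b l) : b ∈ l := by
  obtain ⟨x, hx, h⟩ := h
  exact h.subset (by simp)

theorem three_sublist_append {b x c : ℕ} {l m : List ℕ} (h : [b, x, c].Sublist (l ++ m)) :
    [b, x, c].Sublist l ∨ ([b, x].Sublist l ∧ c ∈ m) ∨ (b ∈ l ∧ [x, c].Sublist m) ∨
      [b, x, c].Sublist m := by
  obtain ⟨s, t, h1, h2, h3⟩ := List.sublist_append_iff.1 h
  rcases s with _ | ⟨s1, _ | ⟨s2, _ | ⟨s3, s⟩⟩⟩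
  · simp at h1; subst h1; right; right; right; exact h3
  · simp at h1; obtain ⟨rfl, rfl⟩ := h1; right; right; left; exact ⟨by simpa using h2, h3⟩
  · simp at h1; obtain ⟨rfl, rfl, rfl⟩ := h1; right; left; exact ⟨h2, by simpa using h3⟩
  · simp at h1; obtain ⟨rfl, rfl, rfl, rfl, rfl⟩ := h1; left; exact h2

theorem bad_append_left {b : ℕ} {l m : List ℕ} (hb : b ∉ m) (h : Bad b (l ++ m)) : Bad b l := by
  obtain ⟨x, hx, h⟩ := h
  rcases three_sublist_append h with h | h | h | h
  · exact ⟨x, hx, h⟩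
  · exact absurd h.2 hb
  · exact absurd (h.2.subset (by simp)) hb
  · exact absurd (h.subset (by simp)) hb

theorem bad_append_right {b : ℕ} {l m : List ℕ} (hb : b ∉ l) (h : Bad b (l ++ m)) : Bad b m := by
  obtain ⟨x, hx, h⟩ := h
  rcases three_sublist_append h with h | h | h | h
  · exact absurd (h.subset (by simp)) hb
  · exact absurd (h.1.subset (by simp)) hb
  · exact absurd h.1 hb
  · exact ⟨x, hx, h⟩

theorem not_bad_replicate (b a k : ℕ) : ¬ Bad b (List.replicate k a) := by
  rintro ⟨x, hx, h⟩
  have h1 := List.eq_of_mem_replicate (h.subset (show b ∈ [b, x, b] by simp))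
  have h2 := List.eq_of_mem_replicate (h.subset (show x ∈ [b, x, b] by simp))
  exact hx (h2.trans h1.symm)

theorem hasABA_append_replicate {l : List ℕ} {a k : ℕ} (ha : a ∉ l) :
    HasABA (l ++ List.replicate k a) ↔ HasABA l := by
  rw [hasABA_iff, hasABA_iff]
  constructor
  · rintro ⟨b, hb⟩
    by_cases hm : b ∈ List.replicate k a
    · have := List.eq_of_mem_replicate hm
      subst this
      exact absurd (bad_append_right ha hb) (not_bad_replicate _ _ _)
    · exact ⟨b, bad_append_left hm hb⟩
  · rintro ⟨b, hb⟩
    exact ⟨b, hb.mono (List.sublist_append_left _ _)⟩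

theorem not_hasABA_replicate (a k : ℕ) : ¬ HasABA (List.replicate k a) := by
  rw [hasABA_iff]
  rintro ⟨b, hb⟩
  exact not_bad_replicate _ _ _ hb

theorem not_hasABA_single (x : ℕ) : ¬ HasABA [x] := not_hasABA_replicate x 1

theorem phiAux_cons (x : ℕ) (xs : List ℕ) (t : ℕ) (st : List ℕ) :
    phiAux (x :: xs) (t :: st) = if HasABA (x :: t :: st) then t :: phiAux (x :: xs) st
      else phiAux xs (x :: t :: st) := by
  rw [phiAux]

/-- pushing when nothing is created -/
theorem phiAux_push {x : ℕ} {xs st : List ℕ} (h : ¬ HasABA (x :: st)) :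
    phiAux (x :: xs) st = phiAux xs (x :: st) := by
  cases st with
  | nil => rw [phiAux]
  | cons t st => rw [phiAux_cons, if_neg h]

theorem phiAux_perm (l st : List ℕ) : (phiAux l st).Perm (l ++ st) := by
  fun_induction phiAux l st with
  | case1 st => simp
  | case2 x xs ih => exact ih.trans (by simpa using List.perm_append_comm (l₁ := xs) (l₂ := [x]))
  | case3 x xs t st h ih =>
    exact (ih.cons t).trans (List.perm_middle (l₁ := x :: xs) (l₂ := st)).symm
  | case4 x xs t st h ih => exact ih.trans (List.perm_middle)

theorem phi_perm (l : List ℕ) : (phi l).Perm l := by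
  simpa [phi] using phiAux_perm l []

theorem phi_mem {l : List ℕ} {a : ℕ} : a ∈ phi l ↔ a ∈ l := (phi_perm l).mem_iff

theorem phiAux_popAll (a k : ℕ) (r st : List ℕ) (hst : a ∉ st) :
    phiAux (a :: r) (st ++ List.replicate (k+1) a)
      = st ++ phiAux r (List.replicate (k+2) a) := by
  induction st with
  | nil =>
    have : ¬ HasABA (a :: List.replicate (k+1) a) := by
      rw [← List.replicate_succ]; exact not_hasABA_replicate _ _
    rw [List.nil_append, phiAux_push this, ← List.replicate_succ, List.nil_append]
  | cons t st ih =>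
    simp only [List.mem_cons, not_or] at hst
    have : HasABA (a :: t :: (st ++ List.replicate (k+1) a)) := by
      rw [hasABA_iff]
      refine ⟨a, t, Ne.symm hst.1, ?_⟩
      refine (List.Sublist.cons_cons _ (List.Sublist.cons_cons _ ?_))
      simp
    rw [List.cons_append, phiAux_cons, if_pos this, ih hst.2, List.cons_append]

theorem phiAux_bottom (a k : ℕ) (r w st : List ℕ) (hw : a ∉ w) (hst : a ∉ st) :
    phiAux (w ++ a :: r) (st ++ List.replicate (k+1) a)
      = phiAux w st ++ phiAux r (List.replicate (k+2) a) := by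
  fun_induction phiAux w st with
  | case1 st => exact phiAux_popAll a k r st hst
  | case2 x xs ih =>
    simp only [List.mem_cons, not_or] at hw
    have h2 : ¬ HasABA (x :: ([] ++ List.replicate (k+1) a)) := by
      have := (hasABA_append_replicate (l := [x]) (a := a) (k := k+1) (by simpa using hw.1))
      simp only [List.cons_append] at this
      rw [this]; exact not_hasABA_single x
    rw [List.cons_append, phiAux_push h2]
    exact ih hw.2 (by simpa using hw.1)
  | case3 x xs t st h ih =>
    have hw' := hw
    have hst' := hst
    simp only [List.mem_cons, not_or] at hw hst
    have h2 := (hasABA_append_replicate (l := x :: t :: st) (a := a) (k := k+1)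
      (by simp [hw.1, hst.1, hst.2])).2 h
    simp only [List.cons_append] at h2 ⊢
    rw [phiAux_cons, if_pos h2]
    congr 1
    exact ih hw' hst.2
  | case4 x xs t st h ih =>
    simp only [List.mem_cons, not_or] at hw hst
    have h2 := (hasABA_append_replicate (l := x :: t :: st) (a := a) (k := k+1)
      (by simp [hw.1, hst.1, hst.2])).not.2 h
    simp only [List.cons_append] at h2 ⊢
    rw [phiAux_cons, if_neg h2]
    exact ih hw.2 (by simp [hw.1, hst.1, hst.2])

theorem phiAux_bottom' (a k : ℕ) (w st : List ℕ) (hw : a ∉ w) (hst : a ∉ st) :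
    phiAux w (st ++ List.replicate (k+1) a)
      = phiAux w st ++ List.replicate (k+1) a := by
  fun_induction phiAux w st with
  | case1 st => rw [phiAux]
  | case2 x xs ih =>
    simp only [List.mem_cons, not_or] at hw
    have h2 : ¬ HasABA (x :: ([] ++ List.replicate (k+1) a)) := by
      have := (hasABA_append_replicate (l := [x]) (a := a) (k := k+1) (by simpa using hw.1))
      simp only [List.cons_append] at this
      rw [this]; exact not_hasABA_single x
    rw [phiAux_push h2]
    exact ih hw.2 (by simpa using hw.1)
  | case3 x xs t st h ih =>
    have hw' := hw
    have hst' := hst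
    simp only [List.mem_cons, not_or] at hw hst
    have h2 := (hasABA_append_replicate (l := x :: t :: st) (a := a) (k := k+1)
      (by simp [hw.1, hst.1, hst.2])).2 h
    simp only [List.cons_append] at h2 ⊢
    rw [phiAux_cons, if_pos h2]
    congr 1
    exact ih hw' hst.2
  | case4 x xs t st h ih =>
    simp only [List.mem_cons, not_or] at hw hst
    have h2 := (hasABA_append_replicate (l := x :: t :: st) (a := a) (k := k+1)
      (by simp [hw.1, hst.1, hst.2])).not.2 h
    simp only [List.cons_append] at h2 ⊢
    rw [phiAux_cons, if_neg h2]
    exact ih hw.2 (by simp [hw.1, hst.1, hst.2])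

/-- split at first occurrence -/
theorem split_first {a : ℕ} {l : List ℕ} (h : a ∈ l) : ∃ s t, a ∉ s ∧ l = s ++ a :: t := by
  obtain ⟨s, t, h1, h2⟩ := List.eq_append_cons_of_mem h
  exact ⟨s, t, h2, h1⟩

theorem phiAux_replicate_succ (a : ℕ) : ∀ (n k : ℕ) (r : List ℕ), r.length ≤ n →
    phiAux r (List.replicate (k+2) a) = phiAux r (List.replicate (k+1) a) ++ [a] := by
  intro n
  induction n with
  | zero =>
    intro k r hr
    have : r = [] := List.length_eq_zero_iff.1 (by omega)
    subst this
    rw [phiAux, phiAux, ← List.replicate_succ']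
  | succ n ih =>
    intro k r hr
    by_cases ha : a ∈ r
    · obtain ⟨s, t, hs, rfl⟩ := split_first ha
      have h1 := phiAux_bottom a (k+1) t s [] hs (by simp)
      have h2 := phiAux_bottom a k t s [] hs (by simp)
      simp only [List.nil_append] at h1 h2
      rw [h1, h2, ih (k+1) t (by simp at hr; omega), List.append_assoc]
    · have h1 := phiAux_bottom' a (k+1) r [] ha (by simp)
      have h2 := phiAux_bottom' a k r [] ha (by simp)
      simp only [List.nil_append] at h1 h2
      rw [h1, h2, List.append_assoc, ← List.replicate_succ']

theorem phi_nil : phi [] = [] := by rw [phi, phiAux]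

theorem phi_cons_notMem {a : ℕ} {w : List ℕ} (h : a ∉ w) : phi (a :: w) = phi w ++ [a] := by
  have := phiAux_bottom' a 0 w [] h (by simp)
  rw [phi, phiAux]
  simpa [phi] using this

theorem phi_cons_split {a : ℕ} {w : List ℕ} (h : a ∉ w) (r : List ℕ) :
    phi (a :: (w ++ a :: r)) = phi w ++ (phi (a :: r) ++ [a]) := by
  have h1 := phiAux_bottom a 0 r w [] h (by simp)
  rw [phiAux_replicate_succ a _ 0 r le_rfl] at h1
  rw [phi, phiAux, phi, phi, phiAux]
  simpa using h1

/-- Induction principle following the recursive structure of `phi`. -/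
theorem word_induction {P : List ℕ → Prop} (h0 : P [])
    (h1 : ∀ a w, a ∉ w → P w → P (a :: w))
    (h2 : ∀ a w r, a ∉ w → P w → P (a :: r) → P (a :: (w ++ a :: r))) : ∀ l, P l := by
  intro l
  induction hn : l.length using Nat.strong_induction_on generalizing l with
  | _ n ih =>
    rcases l with _ | ⟨a, l⟩
    · exact h0
    · simp at hn
      by_cases ha : a ∈ l
      · obtain ⟨s, t, hs, rfl⟩ := split_first ha
        simp at hn
        exact h2 a s t hs (ih s.length (by omega) s rfl)
          (ih (a :: t).length (by simp; omega) _ rfl)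
      · exact h1 a l ha (ih l.length (by omega) l rfl)

theorem phi_cons_form (a : ℕ) (r : List ℕ) :
    ∃ u k, a ∉ u ∧ phi (a :: r) = u ++ List.replicate (k+1) a := by
  suffices h : ∀ l : List ℕ, ∀ a r, l = a :: r →
      ∃ u k, a ∉ u ∧ phi (a :: r) = u ++ List.replicate (k+1) a from h _ a r rfl
  intro l
  induction l using word_induction with
  | h0 => simp
  | h1 b w hb ih =>
    rintro a r ⟨⟩
    exact ⟨phi w, 0, by rwa [phi_mem], by simpa using phi_cons_notMem hb⟩
  | h2 b w t hb ih1 ih2 =>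
    rintro a r ⟨⟩
    obtain ⟨u, k, hu, h⟩ := ih2 b t rfl
    refine ⟨phi w ++ u, k+1, ?_, ?_⟩
    · simp [phi_mem, hb, hu]
    · rw [phi_cons_split hb, h, List.append_assoc, List.append_assoc, ← List.replicate_succ']

theorem not_bad_head (a : ℕ) (r : List ℕ) : ¬ Bad a (phi (a :: r)) := by
  obtain ⟨u, k, hu, h⟩ := phi_cons_form a r
  rw [h]
  intro hb
  exact not_bad_replicate _ _ _ (bad_append_right hu hb)

/-- If `b` is not clumped in `phi l`, then `l` contains `dbdb`, with `d` first before any `b`. -/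
theorem pattern_of_bad (b : ℕ) (l : List ℕ) : Bad b (phi l) →
    ∃ d l1 l2, d ≠ b ∧ l = l1 ++ d :: l2 ∧ b ∉ l1 ∧ [b, d, b].Sublist l2 := by
  induction l using word_induction with
  | h0 => intro h; rw [phi_nil] at h; exact absurd h.mem (by simp)
  | h1 a w ha ih =>
    intro h
    by_cases hab : b = a
    · subst hab; exact absurd h (not_bad_head _ _)
    · rw [phi_cons_notMem ha] at h
      obtain ⟨d, l1, l2, h1, rfl, h3, h4⟩ := ih (bad_append_left (by simpa using hab) h)
      exact ⟨d, a :: l1, l2, h1, by simp, by simp [hab, h3], h4⟩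
  | h2 a w r ha ih1 ih2 =>
    intro h
    by_cases hab : b = a
    · subst hab; exact absurd h (not_bad_head _ _)
    · rw [phi_cons_split ha] at h
      by_cases hw : b ∈ w
      · by_cases hr : b ∈ r
        · refine ⟨a, [], w ++ a :: r, Ne.symm hab, by simp, by simp, ?_⟩
          have e : [b, a, b] = [b] ++ [a, b] := rfl
          rw [e]
          exact (List.singleton_sublist.2 hw).append
            (List.Sublist.cons_cons _ (List.singleton_sublist.2 hr))
        · obtain ⟨d, l1, l2, h1, rfl, h3, h4⟩ := ih1
            (bad_append_left (by simp [phi_mem, hab, hr]) h)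
          exact ⟨d, a :: l1, l2 ++ a :: r, h1, by simp, by simp [hab, h3],
            h4.trans (List.sublist_append_left _ _)⟩
      · have := bad_append_right (by simpa [phi_mem] using hw) h
        obtain ⟨d, l1, l2, h1, h2, h3, h4⟩ := ih2 (bad_append_left (by simpa using hab) this)
        exact ⟨d, a :: w ++ l1, l2, h1, by simp [h2], by simp [hab, h3, hw], h4⟩

theorem bad_of_bad_phi {b : ℕ} {l : List ℕ} (h : Bad b (phi l)) : Bad b l := by
  obtain ⟨d, l1, l2, h1, rfl, h3, h4⟩ := pattern_of_bad b l h
  exact ⟨d, h1, h4.trans (by simp)⟩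

/-- Deleting clumped letters commutes with `phi`. -/
theorem phi_filter (f : ℕ → Bool) (l : List ℕ) : (∀ b, f b = false → ¬ Bad b l) →
    phi (l.filter f) = (phi l).filter f := by
  induction l using word_induction with
  | h0 => simp [phi_nil]
  | h1 a w ha ih =>
    intro h
    have ih' := ih (fun b hb hbad => h b hb (hbad.mono (by simp)))
    rw [phi_cons_notMem ha]
    cases hfa : f a with
    | true =>
      simp only [List.filter_append, List.filter_cons, hfa, if_true, List.filter_nil]
      rw [phi_cons_notMem (fun hh => ha (List.mem_of_mem_filter hh)), ih']
    | false => simp [hfa, ih']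
  | h2 a w r ha ih1 ih2 =>
    intro h
    have ih1' := ih1 (fun b hb hbad => h b hb (hbad.mono
      ((List.sublist_append_left _ _).trans (List.sublist_cons_self _ _))))
    have ih2' := ih2 (fun b hb hbad => h b hb (hbad.mono
      ((List.sublist_append_right _ _).trans (List.sublist_cons_self _ _))))
    rw [phi_cons_split ha]
    cases hfa : f a with
    | true =>
      simp only [List.filter_append, List.filter_cons, hfa, if_true, List.filter_nil] at ih2' ⊢
      rw [phi_cons_split (fun hh => ha (List.mem_of_mem_filter hh)), ih1', ih2']
    | false =>
      have hw : w = [] := by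
        rcases w with _ | ⟨x, w⟩
        · rfl
        · exfalso
          refine h a hfa ⟨x, fun e => ha (by simp [e]), ?_⟩
          simp
      subst hw
      simp [hfa, phi_nil] at ih2' ⊢
      exact ih2'

theorem phi_nodup (w : List ℕ) (h : w.Nodup) : phi w = w.reverse := by
  induction w with
  | nil => exact phi_nil
  | cons a w ih =>
    simp at h
    rw [phi_cons_notMem h.1, ih h.2]; simp

open Classical in
/-- The set of unclumped letters. -/
noncomputable def Un (l : List ℕ) : Finset ℕ := l.toFinset.filter (fun b => Bad b l)

theorem mem_Un {b : ℕ} {l : List ℕ} : b ∈ Un l ↔ Bad b l := by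
  simp only [Un, Finset.mem_filter, List.mem_toFinset, and_iff_right_iff_imp]
  exact Bad.mem

/-- The reduced word. -/
noncomputable def red (l : List ℕ) : List ℕ := l.filter (fun b => decide (b ∈ Un l))

theorem mem_red {b : ℕ} {l : List ℕ} : b ∈ red l ↔ Bad b l := by
  simp only [red, List.mem_filter, decide_eq_true_eq, mem_Un]
  exact ⟨fun h => h.2, fun h => ⟨h.mem, h⟩⟩

theorem Un_phi_subset (l : List ℕ) : Un (phi l) ⊆ Un l := by
  intro b; rw [mem_Un, mem_Un]; exact bad_of_bad_phi

theorem red_head {l t : List ℕ} {a : ℕ} (h : red l = a :: t) : a ∉ Un (phi l) := by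
  rw [mem_Un]
  intro hb
  obtain ⟨d, l1, l2, h1, rfl, h3, h4⟩ := pattern_of_bad a l hb
  have hd : d ∈ Un (l1 ++ d :: l2) := by
    rw [mem_Un]
    refine ⟨a, Ne.symm h1, List.Sublist.trans ?_ (List.sublist_append_right _ _)⟩
    refine List.Sublist.cons_cons _ (List.Sublist.trans ?_ h4)
    simp
  rw [red, List.filter_append] at h
  rcases hl : l1.filter (fun b => decide (b ∈ Un (l1 ++ d :: l2))) with _ | ⟨y, ys⟩
  · rw [hl, List.nil_append, List.filter_cons_of_pos (by simpa using hd)] at h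
    exact h1 (List.cons.inj h).1
  · rw [hl] at h
    have e := (List.cons.inj h).1
    subst e
    exact h3 (List.mem_of_mem_filter (hl ▸ List.mem_cons_self : y ∈ _))

theorem Un_phi_card (l : List ℕ) : (Un (phi l)).card ≤ (Un l).card - 1 := by
  rcases hr : red l with _ | ⟨a, t⟩
  · have : Un l = ∅ := by
      ext b; rw [mem_Un, ← mem_red, hr]; simp
    have h2 : Un (phi l) = ∅ := Finset.subset_empty.1 (this ▸ Un_phi_subset l)
    simp [h2]
  · have ha : a ∈ Un l := by rw [mem_Un, ← mem_red, hr]; simp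
    have : Un (phi l) ⊆ (Un l).erase a := by
      intro b hb
      refine Finset.mem_erase.2 ⟨?_, Un_phi_subset l hb⟩
      rintro rfl
      exact red_head hr hb
    have := Finset.card_le_card this
    rwa [Finset.card_erase_of_mem ha] at this

theorem Un_iter_card (n : ℕ) (l : List ℕ) : (Un (phi^[n] l)).card ≤ (Un l).card - n := by
  induction n generalizing l with
  | zero => simp
  | succ n ih =>
    rw [Function.iterate_succ_apply]
    have := ih (phi l)
    have := Un_phi_card l
    omega

theorem edge {w z y : List ℕ} (h : phi w = z ++ y ++ z) (hz : z ≠ []) (hn : (z ++ y).Nodup) :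
    y = [] ∧ ∃ c, w = [c, c] := by
  rcases w with _ | ⟨c, t⟩
  · rw [phi_nil] at h
    exact absurd (by simpa using congrArg List.length h) (by
      have := List.length_pos_iff.2 hz; omega)
  · obtain ⟨u, k, hu, hf⟩ := phi_cons_form c t
    rcases List.eq_nil_or_concat z with rfl | ⟨z', e, rfl⟩
    · exact absurd rfl hz
    · rw [List.replicate_succ', ← List.append_assoc] at hf
      have hec : e = c := by
        have h9 : (z' ++ [e] ++ y ++ z') ++ [e] = (u ++ List.replicate k c) ++ [c] := by
          rw [← hf, h]; simp
        simpa using (List.append_inj' h9 rfl).2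
      subst hec
      have hnb := not_bad_head e t
      rw [h] at hnb
      simp only [List.concat_eq_append] at hn h hnb
      have hz' : z' = [] := by
        rcases z' with _ | ⟨x, z'⟩
        · rfl
        · exfalso
          refine hnb ⟨x, ?_, ?_⟩
          · rintro rfl; simp at hn
          · have e1 : [e, x, e] = ([] ++ [e]) ++ [] ++ ([x] ++ [e]) := rfl
            rw [e1]
            exact ((((List.nil_sublist _).append (List.Sublist.refl _)).append
              (List.nil_sublist _))).append
              ((List.Sublist.cons_cons _ (List.nil_sublist _)).append (List.Sublist.refl _))
      subst hz'
      have hy : y = [] := by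
        rcases y with _ | ⟨x, y⟩
        · rfl
        · exfalso
          refine hnb ⟨x, ?_, ?_⟩
          · rintro rfl; simp at hn
          · simp
      subst hy
      refine ⟨rfl, e, ?_⟩
      have hp := (phi_perm (e :: t)).symm
      rw [h] at hp
      exact List.perm_replicate.1 (show (e :: t).Perm (List.replicate 2 e) by simpa using hp)

theorem count_red {l : List ℕ} {b : ℕ} (h : Bad b l) : (red l).count b = l.count b := by
  rw [red, List.count_filter]
  simpa [mem_Un] using h

theorem main_ind (k : ℕ) : ∀ p : List ℕ, (∀ b, Bad b p → p.count b = 2) → (Un p).card = k + 1 →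
    (Un (phi^[k] p)).Nonempty → ∃ w : List ℕ, w.Nodup ∧ red p = w ++ w := by
  induction k with
  | zero =>
    intro p hc hU _
    obtain ⟨a, ha⟩ := Finset.card_eq_one.1 hU
    have hb : Bad a p := by rw [← mem_Un, ha]; simp
    refine ⟨[a], by simp, ?_⟩
    have h1 : red p = List.replicate (red p).length a := by
      refine List.eq_replicate_of_mem (fun b h => ?_)
      rw [mem_red, ← mem_Un, ha] at h
      simpa using h
    have h2 := count_red hb
    rw [hc a hb, h1, List.count_replicate_self] at h2
    rw [h2] at h1
    exact h1
  | succ k ih =>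
    intro p hc hU hne
    rw [Function.iterate_succ_apply] at hne
    have hU1 : (Un (phi p)).card = k + 1 := by
      have h1 := Un_phi_card p
      have h2 := Un_iter_card k (phi p)
      have h3 := Finset.card_pos.2 hne
      omega
    have hc' : ∀ b, Bad b (phi p) → (phi p).count b = 2 := by
      intro b hb
      rw [(phi_perm p).count_eq]
      exact hc b (bad_of_bad_phi hb)
    obtain ⟨v, hv, hvv⟩ := ih (phi p) hc' hU1 hne
    -- structure of the reduced word
    rcases hr : red p with _ | ⟨a, t⟩
    · exfalso
      have : Un p = ∅ := by
        ext b; rw [mem_Un, ← mem_red, hr]; simp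
      rw [this] at hU; simp at hU
    have hab : Bad a p := by rw [← mem_red, hr]; simp
    have haU : a ∈ Un p := mem_Un.2 hab
    have hUe : Un (phi p) = (Un p).erase a := by
      apply Finset.eq_of_subset_of_card_le
      · intro b hb
        refine Finset.mem_erase.2 ⟨?_, Un_phi_subset p hb⟩
        rintro rfl
        exact red_head hr hb
      · rw [Finset.card_erase_of_mem haU]; omega
    have hcnt := count_red hab
    rw [hc a hab, hr, List.count_cons_self] at hcnt
    have hat : a ∈ t := by
      rw [← List.count_pos_iff]; omega
    obtain ⟨w1, w2, hw1, rfl⟩ := split_first hat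
    have hw2 : a ∉ w2 := by
      rw [← List.count_eq_zero]
      rw [List.count_append, List.count_cons_self] at hcnt
      omega
    have hphi : phi (red p) = (phi p).filter (fun b => decide (b ∈ Un p)) := by
      apply phi_filter
      intro b hb
      simpa [mem_Un] using hb
    have hred : red (phi p) = phi w1 ++ phi w2 := by
      have e : red (phi p) = (phi (red p)).filter (fun b => decide (b ≠ a)) := by
        rw [hphi, List.filter_filter, red]
        apply List.filter_congr
        intro b _
        rw [hUe]
        simp
      rw [e, hr, phi_cons_split hw1, phi_cons_notMem hw2]
      have f1 : ∀ w : List ℕ, a ∉ w → (phi w).filter (fun b => decide (b ≠ a)) = phi w := by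
        intro w hw
        rw [List.filter_eq_self]
        intro b hb
        have : b ≠ a := by rintro rfl; exact hw (phi_mem.1 hb)
        simpa using this
      rw [List.filter_append, List.filter_append, List.filter_append, f1 w1 hw1, f1 w2 hw2]
      simp
    have hpat : ∀ b, Bad b (phi p) → ∃ d, d ≠ b ∧ [d, b, d, b].Sublist (red p) := by
      intro b hb
      obtain ⟨d, l1, l2, h1, h2, h3, h4⟩ := pattern_of_bad b p hb
      have hs : [d, b, d, b].Sublist p := by
        rw [h2]
        exact (List.Sublist.cons_cons _ h4).trans (List.sublist_append_right _ _)
      refine ⟨d, h1, ?_⟩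
      have hd : Bad d p := ⟨b, Ne.symm h1, List.Sublist.trans (by simp) hs⟩
      have := hs.filter (fun b => decide (b ∈ Un p))
      rw [red]
      simpa [mem_Un, hd, bad_of_bad_phi hb] using this
    rw [hred] at hvv
    -- the case where the lengths agree
    have good : phi w1 = v → phi w2 = v → ∃ w : List ℕ, w.Nodup ∧ a :: (w1 ++ a :: w2) = w ++ w := by
      intro e1 e2
      have n1 : w1.Nodup := (phi_perm w1).nodup_iff.1 (e1 ▸ hv)
      have n2 : w2.Nodup := (phi_perm w2).nodup_iff.1 (e2 ▸ hv)
      have : w1 = w2 := by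
        have := e1.trans e2.symm
        rw [phi_nodup _ n1, phi_nodup _ n2] at this
        exact List.reverse_injective this
      subst this
      exact ⟨a :: w1, by simp [hw1, n1], by simp⟩
    have memBad : ∀ c, c ∈ phi w1 ++ phi w2 → Bad c (phi p) := by
      intro c h
      rw [← mem_red, hred]; exact h
    rcases List.append_eq_append_iff.1 hvv with ⟨z, h1, h2⟩ | ⟨z, h1, h2⟩
    · by_cases hz : z = []
      · subst hz
        exact good (by simpa using h1.symm) (by simpa using h2)
      · exfalso
        have h2' : phi w2 = z ++ phi w1 ++ z := by rw [h2, List.append_assoc, ← h1]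
        obtain ⟨h5, c, rfl⟩ := edge h2' hz (by
          rw [h1] at hv; exact List.nodup_append_comm.1 hv)
        have h6 : w1 = [] := by
          have := (phi_perm w1).symm; rw [h5] at this; simpa using this
        subst h6
        obtain ⟨d, hd, hs⟩ := hpat c (memBad c (by simp [phi_mem]))
        rw [hr] at hs
        have := hs.eq_of_length (by simp)
        simp at this
        exact hd this.2.2
    · by_cases hz : z = []
      · subst hz
        exact good (by simpa using h1) (by simpa using h2.symm)
      · exfalso
        have h2' : phi w1 = z ++ phi w2 ++ z := by rw [h1, h2]
        obtain ⟨h5, c, rfl⟩ := edge h2' hz (by rw [h2] at hv; exact hv)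
        have h6 : w2 = [] := by
          have := (phi_perm w2).symm; rw [h5] at this; simpa using this
        subst h6
        obtain ⟨d, hd, hs⟩ := hpat c (memBad c (by simp [phi_mem]))
        rw [hr] at hs
        have := hs.eq_of_length (by simp)
        simp at this
        omega

/-- If N(p) ≥ 3, |p| ≤ 2N(p) and φ_{aba}^{N(p)-1}(p) is not sorted, then
p is equivalent to (a₁⋯a_{N(p)})². -/
theorem stmt8 (p : List ℕ) (hN : 3 ≤ Nletters p) (hlen : p.length ≤ 2 * Nletters p)
    (h : ¬ SortedWord (phi^[Nletters p - 1] p)) :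
    ∃ w : List ℕ, w.Nodup ∧ w.length = Nletters p ∧ EquivWords p (w ++ w) := by
  rw [sorted_iff, not_not] at h
  obtain ⟨b, hb⟩ := h
  have hne : (Un (phi^[Nletters p - 1] p)).Nonempty := ⟨b, mem_Un.2 hb⟩
  have h1 := Un_iter_card (Nletters p - 1) p
  have h2 := Finset.card_pos.2 hne
  have hsub : Un p ⊆ p.toFinset := fun b hb => List.mem_toFinset.2 (mem_Un.1 hb).mem
  have h3 := Finset.card_le_card hsub
  have hUeq : Un p = p.toFinset := by
    apply Finset.eq_of_subset_of_card_le hsub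
    change Nletters p ≤ _
    omega
  have hge : ∀ b ∈ p.toFinset, 2 ≤ p.count b := by
    intro b hb
    rw [← hUeq, mem_Un] at hb
    obtain ⟨x, hx, hs⟩ := hb
    have := hs.count_le b
    simp [hx] at this
    exact this
  have hsum : ∑ b ∈ p.toFinset, p.count b = p.length := List.sum_toFinset_count_eq_length p
  have hle : ∑ b ∈ p.toFinset, 2 = ∑ b ∈ p.toFinset, p.count b := by
    apply le_antisymm (Finset.sum_le_sum hge)
    rw [hsum, Finset.sum_const, smul_eq_mul, mul_comm]
    exact hlen
  have heq := (Finset.sum_eq_sum_iff_of_le hge).1 hle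
  have hcard : (Un p).card = (Nletters p - 1) + 1 := by
    rw [hUeq]; change Nletters p = _; omega
  obtain ⟨w, hw, hr⟩ := main_ind (Nletters p - 1) p
    (fun b hb => (heq b (List.mem_toFinset.2 hb.mem)).symm) hcard hne
  have hrp : red p = p := by
    rw [red, List.filter_eq_self]
    intro b hb
    rw [hUeq]; simpa using hb
  rw [hrp] at hr
  refine ⟨w, hw, ?_, Equiv.refl ℕ, by simp [hr]⟩
  have h5 : p.toFinset = w.toFinset := by rw [hr]; ext; simp
  rw [Nletters, h5, List.toFinset_card_of_nodup hw]
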